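/- Let m ≥ 2 and let k₁ ≥ k₂ ≥ ⋯ ≥ k_m be a nonincreasing sequence of integers with k₁ + k₂ + ⋯ + k_m = 0 and k_{m−1} = k_m = −1. Then d(k) = Σ_{1 ≤ i < j ≤ m} (k_i − k_j − λ_{ij}) ≥ 4. -/

import Mathlib

/-!
Every pair of partial indices contributes a nonnegative amount to `d(k)`, so `d(k)` is bounded below
by the contribution of the pairs joining the first `n` indices to the last `r`. If the last `r`
indices are at most `-1`, such a pair contributes at least its first index, which gives
`d(k) ≥ r * (k₁ + ⋯ + kₙ)`. The total being zero forces `k₁ + ⋯ + kₙ ≥ r`, hence `d(k) ≥ r²`.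
-/

/-- The contribution `a - b - λ` of a pair of partial indices `a`, `b` to the codimension of their
stratum, where `λ` is `1` if `b < a` and `0` otherwise. It equals `max (a - b - 1) 0` when
`b ≤ a`. -/
def pairCodim (a b : ℤ) : ℤ :=
  a - b - if b < a then 1 else 0

/-- The real codimension `d(k)` of the stratum of loops with partial indices `k₁ ≥ ⋯ ≥ k_m`.
The indices are shifted to start at zero: only `k 0, …, k (m - 1)` are read. -/
def stratumCodim (m : ℕ) (k : ℕ → ℤ) : ℤ :=
  ∑ i ∈ Finset.range m, ∑ j ∈ Finset.Ico (i + 1) m, pairCodim (k i) (k j)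

theorem pairCodim_nonneg {a b : ℤ} (h : b ≤ a) : 0 ≤ pairCodim a b := by
  unfold pairCodim
  split_ifs <;> lia

theorem sub_sub_one_le_pairCodim (a b : ℤ) : a - b - 1 ≤ pairCodim a b := by
  unfold pairCodim
  split_ifs <;> lia

section

variable {m n r : ℕ} {k : ℕ → ℤ}

theorem pairCodim_nonneg_of_antitoneOn (hk : AntitoneOn k (Set.Iio m)) {i j : ℕ}
    (hj : j ∈ Finset.Ico (i + 1) m) : 0 ≤ pairCodim (k i) (k j) := by
  obtain ⟨hij, hjm⟩ := Finset.mem_Ico.mp hj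
  exact pairCodim_nonneg (hk (Set.mem_Iio.mpr (by lia)) hjm (by lia))

theorem sum_pairCodim_head_tail_le_stratumCodim (hk : AntitoneOn k (Set.Iio m)) (hnm : n ≤ m) :
    ∑ i ∈ Finset.range n, ∑ j ∈ Finset.Ico n m, pairCodim (k i) (k j) ≤ stratumCodim m k :=
  calc ∑ i ∈ Finset.range n, ∑ j ∈ Finset.Ico n m, pairCodim (k i) (k j)
    _ ≤ ∑ i ∈ Finset.range n, ∑ j ∈ Finset.Ico (i + 1) m, pairCodim (k i) (k j) :=
      Finset.sum_le_sum fun _ hi ↦ Finset.sum_le_sum_of_subset_of_nonneg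
        (Finset.Ico_subset_Ico_left (Finset.mem_range.mp hi))
        fun _ hj _ ↦ pairCodim_nonneg_of_antitoneOn hk hj
    _ ≤ stratumCodim m k :=
      Finset.sum_le_sum_of_subset_of_nonneg (Finset.range_mono hnm)
        fun _ _ _ ↦ Finset.sum_nonneg fun _ hj ↦ pairCodim_nonneg_of_antitoneOn hk hj

theorem mul_sum_head_le_stratumCodim (hk : AntitoneOn k (Set.Iio (n + r)))
    (htail : ∀ j ∈ Finset.Ico n (n + r), k j ≤ -1) :
    r * ∑ i ∈ Finset.range n, k i ≤ stratumCodim (n + r) k :=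
  calc r * ∑ i ∈ Finset.range n, k i
    _ = ∑ i ∈ Finset.range n, ∑ _j ∈ Finset.Ico n (n + r), k i := by
      simp [Finset.mul_sum]
    _ ≤ ∑ i ∈ Finset.range n, ∑ j ∈ Finset.Ico n (n + r), pairCodim (k i) (k j) :=
      Finset.sum_le_sum fun i _ ↦ Finset.sum_le_sum fun j hj ↦ by
        linarith [htail j hj, sub_sub_one_le_pairCodim (k i) (k j)]
    _ ≤ stratumCodim (n + r) k :=
      sum_pairCodim_head_tail_le_stratumCodim hk (Nat.le_add_right n r)

theorem le_sum_head_of_tail_le_neg_one (hsum : 0 ≤ ∑ i ∈ Finset.range (n + r), k i)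
    (htail : ∀ j ∈ Finset.Ico n (n + r), k j ≤ -1) :
    (r : ℤ) ≤ ∑ i ∈ Finset.range n, k i := by
  have tail_sum_le : ∑ j ∈ Finset.Ico n (n + r), k j ≤ -r := by
    simpa using Finset.sum_le_card_nsmul _ k (-1) htail
  have head_add_tail := Finset.sum_range_add_sum_Ico k (Nat.le_add_right n r)
  linarith

theorem stmt_1_general (hk : AntitoneOn k (Set.Iio (n + r)))
    (hsum : 0 ≤ ∑ i ∈ Finset.range (n + r), k i)
    (htail : ∀ j ∈ Finset.Ico n (n + r), k j ≤ -1) :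
    (r : ℤ) ^ 2 ≤ stratumCodim (n + r) k :=
  calc (r : ℤ) ^ 2
    _ = r * r := sq _
    _ ≤ r * ∑ i ∈ Finset.range n, k i := by
      gcongr
      exact le_sum_head_of_tail_le_neg_one hsum htail
    _ ≤ stratumCodim (n + r) k := mul_sum_head_le_stratumCodim hk htail

end

/-- Codimension estimate for strata with (at least) two partial indices equal to −1:
if `k` is a nonincreasing sequence of `m ≥ 2` integers summing to `0`
whose last two entries equal `−1`, then
`d(k) = ∑_{i<j} (kᵢ − kⱼ − λᵢⱼ) ≥ 4`, where `λᵢⱼ = 1` if `kᵢ > kⱼ` and `0` otherwise. -/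
theorem stmt_1 (m : ℕ) (hm : 2 ≤ m) (k : ℕ → ℤ)
    (hmono : ∀ i j, i ≤ j → j < m → k j ≤ k i)
    (hsum : ∑ i ∈ Finset.range m, k i = 0)
    (h1 : k (m - 2) = -1) (h2 : k (m - 1) = -1) :
    (4 : ℤ) ≤
      ∑ i ∈ Finset.range m, ∑ j ∈ Finset.Ico (i + 1) m,
        (k i - k j - if k j < k i then 1 else 0) := by
  obtain ⟨n, rfl⟩ := Nat.exists_eq_add_of_le' hm
  have htail : ∀ j ∈ Finset.Ico n (n + 2), k j ≤ -1 := fun j hj ↦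
    h1 ▸ hmono n j (Finset.mem_Ico.mp hj).1 (Finset.mem_Ico.mp hj).2
  exact stmt_1_general (fun i _ j hj hij ↦ hmono i j hij hj) hsum.ge htail
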